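/- arXiv:1504.04182 — 2 statements merged into one kernel-verified Lean document; each statement's English description precedes it below -/
import Mathlib

section
/- For every τ in the upper half-plane H₁ and every z ∈ ℂ, the square of the odd Jacobi theta function admits the theta decomposition θ(τ,z)² = θ₂(2τ)·θ₃(2τ,2z) − θ₃(2τ)·θ₂(2τ,2z); equivalently, θ(τ,z)²/η(τ)⁶ = h̃₀(τ)·θ₃(2τ,2z) + h̃₁(τ)·θ₂(2τ,2z) with h̃₀(τ) = θ₂(2τ)/η(τ)⁶ and h̃₁(τ) = −θ₃(2τ)/η(τ)⁶. -/
/-!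
STATEMENT 2: Theta decomposition of the square of the odd Jacobi theta function:
θ(τ,z)² = θ₂(2τ)·θ₃(2τ,2z) − θ₃(2τ)·θ₂(2τ,2z), equivalently
θ(τ,z)²/η(τ)⁶ = h̃₀(τ)·θ₃(2τ,2z) + h̃₁(τ)·θ₂(2τ,2z)
with h̃₀ = θ₂(2τ)/η⁶ and h̃₁ = −θ₃(2τ)/η⁶.
-/

noncomputable section
open Complex Real

namespace KZ

/-- Jacobi theta function θ₂(τ,z) = Σ_{n∈ℤ} e^{iπ(n+1/2)²τ + 2πi(n+1/2)z}. -/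
def theta2 (τ z : ℂ) : ℂ :=
  ∑' n : ℤ, Complex.exp (π * I * (n + 1/2)^2 * τ + 2 * π * I * (n + 1/2) * z)

/-- Jacobi theta function θ₃(τ,z) = Σ_{n∈ℤ} e^{iπn²τ + 2πinz}. -/
def theta3 (τ z : ℂ) : ℂ :=
  ∑' n : ℤ, Complex.exp (π * I * (n:ℂ)^2 * τ + 2 * π * I * n * z)

/-- The odd Jacobi theta function θ(τ,z) = Σ_{n∈ℤ} e^{iπ(n+1/2)²τ + 2πi(n+1/2)(z+1/2)}. -/
def thetaOdd (τ z : ℂ) : ℂ :=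
  ∑' n : ℤ, Complex.exp (π * I * (n + 1/2)^2 * τ + 2 * π * I * (n + 1/2) * (z + 1/2))

/-- Dedekind eta function η(τ) = e^{iπτ/12} ∏_{n≥1} (1 − e^{2πinτ}). -/
def eta (τ : ℂ) : ℂ :=
  Complex.exp (π * I * τ / 12) * ∏' n : ℕ, (1 - Complex.exp (2 * π * I * (n + 1) * τ))

/-- h̃₀(τ) = θ₂(2τ)/η(τ)⁶. -/
def htilde0 (τ : ℂ) : ℂ := theta2 (2*τ) 0 / (eta τ)^6

/-- h̃₁(τ) = −θ₃(2τ)/η(τ)⁶. -/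
def htilde1 (τ : ℂ) : ℂ := - theta3 (2*τ) 0 / (eta τ)^6

lemma summable3 (τ : ℂ) (hτ : 0 < τ.im) (z : ℂ) :
    Summable fun n : ℤ => Complex.exp (π * I * (n:ℂ)^2 * τ + 2 * π * I * n * z) := by
  refine ((summable_jacobiTheta₂_term_iff z τ).2 hτ).congr fun n => ?_
  rw [jacobiTheta₂_term, add_comm]

lemma summable2 (τ : ℂ) (hτ : 0 < τ.im) (z : ℂ) :
    Summable fun n : ℤ =>
      Complex.exp (π * I * (n + 1/2)^2 * τ + 2 * π * I * (n + 1/2) * z) := by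
  refine (((summable_jacobiTheta₂_term_iff (z + τ / 2) τ).2 hτ).mul_left
    (Complex.exp (π * I * τ / 4 + π * I * z))).congr fun n => ?_
  rw [jacobiTheta₂_term, ← Complex.exp_add]
  congr 1
  ring

lemma hasSum_mul' {f g : ℤ → ℂ} (hf : Summable f) (hg : Summable g) :
    HasSum (fun p : ℤ × ℤ => f p.1 * g p.2) ((∑' n, f n) * ∑' n, g n) :=
  hf.hasSum.mul hg.hasSum (summable_mul_of_summable_norm hf.norm hg.norm)

lemma exp_even (x : ℂ) (k : ℤ) : Complex.exp (x + k * (2 * π * I)) = Complex.exp x :=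
  Complex.exp_periodic.int_mul k x

lemma exp_odd (x : ℂ) (k : ℤ) :
    Complex.exp (x + k * (2 * π * I) + π * I) = - Complex.exp x := by
  rw [Complex.exp_add, exp_even, Complex.exp_pi_mul_I]
  ring

lemma hasSum_congr_aux {f g : ℤ × ℤ → ℂ} {a : ℂ} (hf : HasSum f a) (h : ∀ p, g p = f p) :
    HasSum g a := by
  rwa [funext h]

lemma main_identity (τ : ℂ) (hτ : 0 < τ.im) (z : ℂ) :
    (thetaOdd τ z)^2 = theta2 (2*τ) 0 * theta3 (2*τ) (2*z)
        - theta3 (2*τ) 0 * theta2 (2*τ) (2*z) := by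
  have h2 : 0 < (2 * τ).im := by simpa using hτ
  have hO := hasSum_mul' (summable2 τ hτ (z + 1/2)) (summable2 τ hτ (z + 1/2))
  have hE := hasSum_mul' (summable2 (2*τ) h2 0) (summable3 (2*τ) h2 (2*z))
  have hD := (hasSum_mul' (summable3 (2*τ) h2 0) (summable2 (2*τ) h2 (2*z))).neg
  set F : ℤ × ℤ → ℂ := fun p =>
    Complex.exp (π * I * (p.1 + 1/2)^2 * τ + 2 * π * I * (p.1 + 1/2) * (z + 1/2)) *
    Complex.exp (π * I * (p.2 + 1/2)^2 * τ + 2 * π * I * (p.2 + 1/2) * (z + 1/2)) with hF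
  -- the two parametrisations, `p = (l, k)`
  let u : ℤ × ℤ → ℤ × ℤ := fun p => (p.2 + p.1, p.2 - p.1 - 1)
  let v : ℤ × ℤ → ℤ × ℤ := fun p => (p.2 + p.1, p.2 - p.1)
  have hu : Function.Injective u := by
    rintro ⟨a, b⟩ ⟨c, d⟩ h
    simp only [u, Prod.mk.injEq] at h ⊢
    omega
  have hv : Function.Injective v := by
    rintro ⟨a, b⟩ ⟨c, d⟩ h
    simp only [v, Prod.mk.injEq] at h ⊢
    omega
  have hc : IsCompl (Set.range u) (Set.range v) := by
    constructor
    · rw [Set.disjoint_left]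
      rintro _ ⟨⟨a, b⟩, rfl⟩ ⟨⟨c, d⟩, h⟩
      simp only [u, v, Prod.mk.injEq] at h
      omega
    · rw [codisjoint_iff_le_sup]
      rintro ⟨n, m⟩ -
      rcases Int.even_or_odd (n + m) with ⟨k, hk⟩ | ⟨k, hk⟩
      · right
        refine ⟨(n - k, k), ?_⟩
        simp only [v, Prod.mk.injEq]
        omega
      · left
        refine ⟨(n - k - 1, k + 1), ?_⟩
        simp only [u, Prod.mk.injEq]
        omega
  have hE' : HasSum (F ∘ u) (theta2 (2*τ) 0 * theta3 (2*τ) (2*z)) := by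
    refine hasSum_congr_aux hE ?_
    rintro ⟨l, k⟩
    simp only [hF, u, Function.comp, ← Complex.exp_add]
    symm
    rw [← exp_even _ k]
    congr 1
    push_cast
    ring
  have hD' : HasSum (F ∘ v) (-(theta3 (2*τ) 0 * theta2 (2*τ) (2*z))) := by
    refine hasSum_congr_aux hD ?_
    rintro ⟨l, k⟩
    simp only [hF, v, Function.comp, ← Complex.exp_add]
    symm
    rw [← exp_odd _ k]
    congr 1
    push_cast
    ring
  have hS : HasSum F _ :=
    HasSum.add_isCompl (f := F) hc (hu.hasSum_range_iff.2 hE') (hv.hasSum_range_iff.2 hD')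
  rw [sq, sub_eq_add_neg]
  exact hO.unique hS

theorem thetaOdd_sq_decomposition (τ : ℂ) (hτ : 0 < τ.im) (z : ℂ) :
    (thetaOdd τ z)^2 = theta2 (2*τ) 0 * theta3 (2*τ) (2*z)
        - theta3 (2*τ) 0 * theta2 (2*τ) (2*z) ∧
    (thetaOdd τ z)^2 / (eta τ)^6
      = htilde0 τ * theta3 (2*τ) (2*z) + htilde1 τ * theta2 (2*τ) (2*z) := by
  have h := main_identity τ hτ z
  refine ⟨h, ?_⟩
  rw [h, htilde0, htilde1]
  ring

end KZ
end
end

section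
/- For i = 0,1 and all τ in the upper half-plane H₁, the raising operator applied to the weight −5/2 forms h̃ᵢ satisfies D_τ h̃ᵢ(τ) = (5/12)·Ê₂(τ)·h̃ᵢ(τ) − (1/24)·hᵢ(τ), where Ê₂ is the almost holomorphic Eisenstein series of weight 2 and h₀, h₁ are the theta coefficients of the K3 elliptic genus. -/
/-!
STATEMENT 3: For i = 0,1 the raising operator at weight −5/2 satisfies
D_τ h̃ᵢ(τ) = (5/12)·Ê₂(τ)·h̃ᵢ(τ) − (1/24)·hᵢ(τ), where Ê₂ = E₂ − 3/(πτ₂).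
-/

noncomputable section
open Complex Real

namespace KZ

def theta4 (τ : ℂ) : ℂ :=
  ∑' n : ℤ, (-1:ℂ)^n * Complex.exp (π * I * (n:ℂ)^2 * τ)

/-- h₀(τ) = 24θ₃(2τ)/θ₃(τ)² − 2((θ₄⁴−θ₂⁴)/η⁶)θ₂(2τ). -/
def h0 (τ : ℂ) : ℂ :=
  24 * theta3 (2*τ) 0 / (theta3 τ 0)^2
    - 2 * (((theta4 τ)^4 - (theta2 τ 0)^4) / (eta τ)^6) * theta2 (2*τ) 0

/-- h₁(τ) = 24θ₂(2τ)/θ₃(τ)² + 2((θ₄⁴−θ₂⁴)/η⁶)θ₃(2τ). -/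
def h1 (τ : ℂ) : ℂ :=
  24 * theta2 (2*τ) 0 / (theta3 τ 0)^2
    + 2 * (((theta4 τ)^4 - (theta2 τ 0)^4) / (eta τ)^6) * theta3 (2*τ) 0

/-- The holomorphic Eisenstein series E₂(τ) = 1 − 24 Σ_{n≥1} σ₁(n) qⁿ. -/
def E2 (τ : ℂ) : ℂ :=
  1 - 24 * ∑' n : ℕ, ((ArithmeticFunction.sigma 1) (n+1) : ℂ)
    * Complex.exp (2 * π * I * τ) ^ (n+1)

/-- The almost holomorphic Eisenstein series Ê₂(τ) = E₂(τ) − 3/(πτ₂). -/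
def E2hat (τ : ℂ) : ℂ := E2 τ - 3 / (π * τ.im)

/-- The raising operator at weight −5/2 on holomorphic functions:
D_τ f = (i/π)(∂_τ f + (5i/(4τ₂)) f). -/
def Dtau (f : ℂ → ℂ) (τ : ℂ) : ℂ :=
  (I / π) * (deriv f τ + (5 * I / (4 * τ.im)) * f τ)


open scoped ModularForm MatrixGroups in
open UpperHalfPlane ModularGroup SlashInvariantForm Filter in
/-- A holomorphic function of `q` on the disc that is invariant under `S` is constant. -/
lemma const_of_S_inv (F : ℂ → ℂ) (hF : DifferentiableOn ℂ F (Metric.ball 0 1))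
    (hS : ∀ τ : ℂ, 0 < τ.im →
      F (Complex.exp (2 * π * Complex.I * (-1/τ))) = F (Complex.exp (2 * π * Complex.I * τ)))
    (τ : ℂ) (hτ : 0 < τ.im) : F (Complex.exp (2 * π * Complex.I * τ)) = F 0 := by
  let f : UpperHalfPlane → ℂ := fun z ↦ F (Complex.exp (2 * π * Complex.I * z))
  have hc0 : ContinuousAt F 0 :=
    (hF.differentiableAt (Metric.isOpen_ball.mem_nhds (by simp))).continuousAt
  have htend : Tendsto f atImInfty (nhds (F 0)) := by
    refine (hc0.tendsto.comp (UpperHalfPlane.qParam_tendsto_atImInfty zero_lt_one)).congr ?_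
    intro z; simp [f, Function.Periodic.qParam]
  have h1 : f ∣[(0 : ℤ)] S = f := by
    ext z
    rw [ModularForm.SL_slash_apply, UpperHalfPlane.modular_S_smul]
    have := hS z z.2
    simp only [f]
    simpa [neg_div] using this
  have h2 : f ∣[(0 : ℤ)] T = f := by
    ext z
    rw [ModularForm.SL_slash_apply, modular_T_smul]
    simp only [f, UpperHalfPlane.coe_vadd]
    have : Complex.exp (2 * π * Complex.I * (1 + z)) = Complex.exp (2 * π * Complex.I * z) := by
      rw [mul_add, Complex.exp_add]; simp
    simp [this]
  let M : ModularForm (Matrix.SpecialLinearGroup.mapGL ℝ : Matrix.SpecialLinearGroup (Fin 2) ℤ →* _).range 0 :=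
    { toFun := f
      slash_action_eq' := by
        intro A hA
        obtain ⟨A, rfl⟩ := hA
        exact slash_action_generators_SL2Z h1 h2 A
      holo' := by
        rw [UpperHalfPlane.mdifferentiable_iff]
        have : DifferentiableOn ℂ (fun z ↦ F (Complex.exp (2 * π * Complex.I * z))) {z | 0 < z.im} := by
          refine hF.comp (f := fun z ↦ Complex.exp (2 * π * Complex.I * z)) (by fun_prop) ?_
          intro z hz
          simpa using norm_exp_two_pi_I_lt_one ⟨z, hz⟩
        refine this.congr fun z hz ↦ ?_
        simp [f, ofComplex_apply_of_im_pos hz]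
      bdd_at_cusps' := by
        intro c hc
        rw [Subgroup.IsArithmetic.isCusp_iff_isCusp_SL2Z] at hc
        rw [OnePoint.isBoundedAt_iff_forall_SL2Z hc]
        intro γ _
        rw [slash_action_generators_SL2Z h1 h2]
        exact htend.isBigO_one ℝ }
  obtain ⟨c, hc⟩ := ModularFormClass.levelOne_weight_zero_const M
  have hfc : f = Function.const _ c := hc
  have : c = F 0 := by
    rw [hfc] at htend
    exact tendsto_nhds_unique tendsto_const_nhds htend
  have h3 := congrFun hfc ⟨τ, hτ⟩
  simpa [f, this] using h3

/-- The q-series with exponents `e n`. -/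
def G (e : ℤ → ℕ) (q : ℂ) : ℂ := ∑' n : ℤ, q ^ e n

lemma summable_pow_exp (e : ℤ → ℕ) (he : ∀ n, n.natAbs ≤ e n + 1) {r : ℝ} (h0 : 0 < r)
    (h1 : r < 1) : Summable fun n : ℤ ↦ r ^ e n := by
  have hs : Summable fun n : ℤ ↦ r⁻¹ * r ^ n.natAbs := by
    apply Summable.mul_left
    have := summable_geometric_of_lt_one h0.le h1
    apply Summable.of_nat_of_neg <;> simpa using this
  refine hs.of_nonneg_of_le (fun n ↦ by positivity) fun n ↦ ?_
  have := pow_le_pow_of_le_one h0.le h1.le (he n)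
  rw [pow_succ] at this
  rw [inv_mul_eq_div, le_div_iff₀ h0]
  exact this

lemma G_diff (e : ℤ → ℕ) (he : ∀ n, n.natAbs ≤ e n + 1) :
    DifferentiableOn ℂ (G e) (Metric.ball 0 1) := by
  intro q hq
  have hq' : ‖q‖ < 1 := by simpa using hq
  obtain ⟨r, hr, hr1⟩ := exists_between hq'
  have h0 : 0 < r := (norm_nonneg q).trans_lt hr
  have : DifferentiableOn ℂ (fun q : ℂ ↦ ∑' n : ℤ, q ^ e n) (Metric.ball 0 r) := by
    refine Complex.differentiableOn_tsum_of_summable_norm (summable_pow_exp e he h0 hr1)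
      (fun i ↦ by fun_prop) Metric.isOpen_ball ?_
    intro i w hw
    rw [norm_pow]
    exact pow_le_pow_left₀ (norm_nonneg _) (by simpa using (mem_ball_zero_iff.mp hw).le) _
  exact (this.differentiableAt (Metric.isOpen_ball.mem_nhds (by simpa using hr))).differentiableWithinAt

/-- Exponents for `θ₃(2τ)`. -/
def ea (n : ℤ) : ℕ := n.natAbs ^ 2
/-- Exponents for `θ₂(2τ)`. -/
def eb (n : ℤ) : ℕ := (n * (n + 1)).natAbs

lemma hea (n : ℤ) : n.natAbs ≤ ea n + 1 := by unfold ea; nlinarith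
lemma heb (n : ℤ) : n.natAbs ≤ eb n + 1 := by
  unfold eb
  rw [Int.natAbs_mul]
  rcases Nat.eq_zero_or_pos (n+1).natAbs with h | h
  · omega
  · exact (Nat.le_mul_of_pos_right _ h).trans (Nat.le_succ _)

lemma G_ea_zero : G ea 0 = 1 := by
  unfold G
  rw [tsum_eq_single 0]
  · simp [ea]
  · intro n hn; simp [ea, hn]

lemma G_eb_zero : G eb 0 = 2 := by
  unfold G
  rw [tsum_eq_sum (s := {0, -1})]
  · rw [Finset.sum_pair (by norm_num)]; norm_num [eb]
  · intro n hn
    have : eb n ≠ 0 := by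
      simp [eb] at hn ⊢
      omega
    simp [this]

lemma theta3_eq (t : ℂ) : theta3 t 0 = jacobiTheta₂ 0 t := by
  unfold theta3 jacobiTheta₂ jacobiTheta₂_term
  refine tsum_congr fun n ↦ ?_
  congr 1; ring

lemma theta4_eq (t : ℂ) : theta4 t = jacobiTheta₂ (1/2) t := by
  unfold theta4 jacobiTheta₂ jacobiTheta₂_term
  refine tsum_congr fun n ↦ ?_
  rw [Complex.exp_add]
  congr 1
  rw [← Complex.exp_pi_mul_I, ← Complex.exp_int_mul]
  congr 1; ring

lemma theta2_eq (t : ℂ) : theta2 t 0 = Complex.exp (π * I * t / 4) * jacobiTheta₂ (t/2) t := by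
  unfold theta2 jacobiTheta₂ jacobiTheta₂_term
  rw [← tsum_mul_left]
  refine tsum_congr fun n ↦ ?_
  rw [← Complex.exp_add]
  congr 1; ring

lemma sum3 {t : ℂ} (ht : 0 < t.im) :
    HasSum (fun n : ℤ ↦ Complex.exp (π * I * (n:ℂ)^2 * t)) (theta3 t 0) := by
  rw [theta3_eq]
  refine (hasSum_jacobiTheta₂_term 0 ht).congr_fun fun n ↦ ?_
  simp [jacobiTheta₂_term]

lemma sum4 {t : ℂ} (ht : 0 < t.im) :
    HasSum (fun n : ℤ ↦ (-1:ℂ)^n * Complex.exp (π * I * (n:ℂ)^2 * t)) (theta4 t) := by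
  rw [theta4_eq]
  refine (hasSum_jacobiTheta₂_term (1/2) ht).congr_fun fun n ↦ ?_
  unfold jacobiTheta₂_term
  rw [Complex.exp_add]
  congr 1
  rw [← Complex.exp_pi_mul_I, ← Complex.exp_int_mul]
  congr 1; ring

lemma sum2 {t : ℂ} (ht : 0 < t.im) :
    HasSum (fun n : ℤ ↦ Complex.exp (π * I * ((n:ℂ) + 1/2)^2 * t)) (theta2 t 0) := by
  rw [theta2_eq]
  refine ((hasSum_jacobiTheta₂_term (t/2) ht).mul_left _).congr_fun fun n ↦ ?_
  unfold jacobiTheta₂_term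
  rw [← Complex.exp_add]
  congr 1; ring

lemma hasSum_prod {f g : ℤ → ℂ} {a b : ℂ} (hf : HasSum f a) (hg : HasSum g b) :
    HasSum (fun p : ℤ × ℤ ↦ f p.1 * g p.2) (a * b) :=
  hf.mul hg (summable_mul_of_summable_norm hf.summable.norm hg.summable.norm)

/-- Splitting a lattice sum along a bijection. -/
lemma split {ι κ : Type*} (e : ι ⊕ ι → κ) (he : Function.Bijective e) {f : κ → ℂ} {a b c : ℂ}
    (hf : HasSum f c) (h1 : HasSum (fun i ↦ f (e (.inl i))) a)
    (h2 : HasSum (fun i ↦ f (e (.inr i))) b) : c = a + b := by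
  have h := HasSum.sum (f := f ∘ e) h1 h2
  have h' := ((Equiv.ofBijective e he).hasSum_iff (f := f) (a := c)).mpr hf
  exact h'.unique h

/-- even / odd integers -/
def e1 : ℤ ⊕ ℤ → ℤ := Sum.elim (fun n ↦ 2 * n) (fun n ↦ 2 * n + 1)

lemma he1 : Function.Bijective e1 := by
  constructor
  · rintro (a | a) (b | b) h <;> simp [e1] at h ⊢ <;> omega
  · intro n
    rcases Int.even_or_odd' n with ⟨k, h | h⟩
    · exact ⟨.inl k, by simp [e1, h]⟩
    · exact ⟨.inr k, by simp [e1, h]⟩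

/-- `(u,v) = (m+n, m-n)` -/
def e2 : (ℤ × ℤ) ⊕ (ℤ × ℤ) → ℤ × ℤ :=
  Sum.elim (fun p ↦ (p.1 + p.2, p.1 - p.2)) (fun p ↦ (p.1 + p.2 + 1, p.1 - p.2))

lemma he2 : Function.Bijective e2 := by
  constructor
  · rintro (⟨a, b⟩ | ⟨a, b⟩) (⟨c, d⟩ | ⟨c, d⟩) h <;> simp [e2] at h ⊢ <;> omega
  · rintro ⟨m, n⟩
    rcases Int.even_or_odd' (m + n) with ⟨k, h | h⟩
    · exact ⟨.inl (k, m - k), by simp [e2]; omega⟩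
    · exact ⟨.inr (k, m - k - 1), by simp [e2]; omega⟩

/-- `(u,v) = (m+n+1, m-n)` -/
def e3 : (ℤ × ℤ) ⊕ (ℤ × ℤ) → ℤ × ℤ :=
  Sum.elim (fun p ↦ (p.1 + p.2, p.1 - p.2 - 1)) (fun p ↦ (p.1 + p.2, p.1 - p.2))

lemma he3 : Function.Bijective e3 := by
  constructor
  · rintro (⟨a, b⟩ | ⟨a, b⟩) (⟨c, d⟩ | ⟨c, d⟩) h <;> simp [e3] at h ⊢ <;> omega
  · rintro ⟨m, n⟩
    rcases Int.even_or_odd' (m + n) with ⟨k, h | h⟩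
    · exact ⟨.inr (k, m - k), by simp [e3]; omega⟩
    · exact ⟨.inl (k + 1, m - k - 1), by simp [e3]; omega⟩

lemma im2 {τ : ℂ} (hτ : 0 < τ.im) : 0 < (2 * τ).im := by simpa using hτ
lemma imh {τ : ℂ} (hτ : 0 < τ.im) : 0 < (τ / 2).im := by simpa using hτ

lemma neg_one_even (k : ℤ) : (-1 : ℂ) ^ (2 * k) = 1 := Even.neg_one_zpow ⟨k, by ring⟩
lemma neg_one_odd (k : ℤ) : (-1 : ℂ) ^ (2 * k + 1) = -1 := Odd.neg_one_zpow ⟨k, by ring⟩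

lemma theta3_half {τ : ℂ} (hτ : 0 < τ.im) :
    theta3 (τ/2) 0 = theta3 (2*τ) 0 + theta2 (2*τ) 0 := by
  refine split e1 he1 (sum3 (imh hτ)) ((sum3 (im2 hτ)).congr_fun fun n ↦ ?_)
    ((sum2 (im2 hτ)).congr_fun fun n ↦ ?_) <;>
  · simp only [e1, Sum.elim_inl, Sum.elim_inr]
    congr 1; push_cast; ring

lemma theta4_half {τ : ℂ} (hτ : 0 < τ.im) :
    theta4 (τ/2) = theta3 (2*τ) 0 - theta2 (2*τ) 0 := by
  rw [sub_eq_add_neg]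
  refine split e1 he1 (sum4 (imh hτ)) ((sum3 (im2 hτ)).congr_fun fun n ↦ ?_)
    ((sum2 (im2 hτ)).neg.congr_fun fun n ↦ ?_)
  · simp only [e1, Sum.elim_inl, Sum.elim_inr, neg_one_even, one_mul]
    congr 1; push_cast; ring
  · simp only [e1, Sum.elim_inl, Sum.elim_inr, neg_one_odd, neg_one_mul]
    congr 2; push_cast; ring

lemma theta3_sq {τ : ℂ} (hτ : 0 < τ.im) :
    (theta3 τ 0)^2 = (theta3 (2*τ) 0)^2 + (theta2 (2*τ) 0)^2 := by
  simp only [sq]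
  refine split e2 he2 (hasSum_prod (sum3 hτ) (sum3 hτ))
    ((hasSum_prod (sum3 (im2 hτ)) (sum3 (im2 hτ))).congr_fun fun n ↦ ?_)
    ((hasSum_prod (sum2 (im2 hτ)) (sum2 (im2 hτ))).congr_fun fun n ↦ ?_) <;>
  · simp only [e2, Sum.elim_inl, Sum.elim_inr, ← Complex.exp_add]
    congr 1; push_cast; ring

lemma theta4_sq {τ : ℂ} (hτ : 0 < τ.im) :
    (theta4 τ)^2 = (theta3 (2*τ) 0)^2 - (theta2 (2*τ) 0)^2 := by
  rw [sub_eq_add_neg]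
  simp only [sq]
  refine split e2 he2 (hasSum_prod (sum4 hτ) (sum4 hτ))
    ((hasSum_prod (sum3 (im2 hτ)) (sum3 (im2 hτ))).congr_fun fun n ↦ ?_)
    ((hasSum_prod (sum2 (im2 hτ)) (sum2 (im2 hτ))).neg.congr_fun fun n ↦ ?_)
  · simp only [e2, Sum.elim_inl, Sum.elim_inr]
    rw [mul_mul_mul_comm, ← zpow_add₀ (by norm_num), ← Complex.exp_add, ← Complex.exp_add,
      show n.1 + n.2 + (n.1 - n.2) = 2 * n.1 by ring, neg_one_even, one_mul]
    congr 1; push_cast; ring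
  · simp only [e2, Sum.elim_inl, Sum.elim_inr]
    rw [mul_mul_mul_comm, ← zpow_add₀ (by norm_num), ← Complex.exp_add, ← Complex.exp_add,
      show n.1 + n.2 + 1 + (n.1 - n.2) = 2 * n.1 + 1 by ring, neg_one_odd, neg_one_mul]
    congr 2; push_cast; ring

lemma theta2_sq {τ : ℂ} (hτ : 0 < τ.im) :
    (theta2 τ 0)^2 = 2 * theta3 (2*τ) 0 * theta2 (2*τ) 0 := by
  rw [mul_assoc, two_mul, sq]
  refine split e3 he3 (hasSum_prod (sum2 hτ) (sum2 hτ))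
    ((hasSum_prod (sum3 (im2 hτ)) (sum2 (im2 hτ))).congr_fun fun n ↦ ?_) ?_
  · simp only [e3, Sum.elim_inl, Sum.elim_inr, ← Complex.exp_add]
    congr 1; push_cast; ring
  · rw [mul_comm (theta3 _ _)]
    refine (hasSum_prod (sum2 (im2 hτ)) (sum3 (im2 hτ))).congr_fun fun n ↦ ?_
    simp only [e3, Sum.elim_inl, Sum.elim_inr, ← Complex.exp_add]
    congr 1; push_cast; ring

/-- `A = θ₃(2τ)` -/
def A (τ : ℂ) : ℂ := theta3 (2*τ) 0
/-- `B = θ₂(2τ)` -/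
def B (τ : ℂ) : ℂ := theta2 (2*τ) 0
/-- the automorphy factor -/
def c (τ : ℂ) : ℂ := (-I * (τ/2)) ^ (1 / 2 : ℂ)

lemma cne {τ : ℂ} (hτ : 0 < τ.im) : c τ ≠ 0 := by
  have : τ ≠ 0 := by rintro rfl; simp at hτ
  simp [c, Complex.cpow_eq_zero_iff, this]

lemma c_sq (τ : ℂ) : c τ ^ 2 = -I * τ / 2 := by
  unfold c
  rw [← Complex.cpow_nat_mul]
  norm_num
  ring

lemma A_S {τ : ℂ} (hτ : 0 < τ.im) : A (-1/τ) = c τ * (A τ + B τ) := by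
  have h := jacobiTheta₂_functional_equation 0 (τ/2)
  have h0 : τ ≠ 0 := by rintro rfl; simp at hτ
  have hc := cne hτ
  rw [← theta3_eq, theta3_half hτ, show -1 / (τ/2) = 2 * (-1/τ) by field_simp] at h
  simp only [zero_div, ← theta3_eq] at h
  change A τ + B τ = 1 / c τ * _ * A (-1/τ) at h
  rw [h]; field_simp; simp

lemma B_S {τ : ℂ} (hτ : 0 < τ.im) : B (-1/τ) = c τ * (A τ - B τ) := by
  have h := jacobiTheta₂_functional_equation (1/2) (τ/2)
  have h0 : τ ≠ 0 := by rintro rfl; simp at hτ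
  have hc := cne hτ
  rw [← theta4_eq, theta4_half hτ, show -1 / (τ/2) = 2 * (-1/τ) by field_simp,
    show (1/2 : ℂ) / (τ/2) = -((2 * (-1/τ))/2) by field_simp, jacobiTheta₂_neg_left] at h
  change A τ - B τ = 1 / c τ * _ * _ at h
  have h2 : B (-1/τ) = _ := theta2_eq (2 * (-1/τ))
  rw [h, h2]
  rw [show -π * I * (1/2)^2 / (τ/2) = π * I * (2 * (-1/τ)) / 4 by field_simp; norm_num]
  field_simp

/-- `q = e^{2πiτ}` -/
def Q (τ : ℂ) : ℂ := Complex.exp (2 * π * I * τ)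

lemma A_G (τ : ℂ) : A τ = G ea (Q τ) := by
  unfold A theta3 G ea Q
  refine tsum_congr fun n ↦ ?_
  rw [← Complex.exp_nat_mul]
  congr 1
  have : ((n.natAbs ^ 2 : ℕ) : ℂ) = (n:ℂ)^2 := by
    have : ((n.natAbs ^ 2 : ℕ) : ℤ) = n^2 := by simp
    have := congrArg (Int.cast : ℤ → ℂ) this
    rw [Int.cast_natCast] at this
    rw [this]; push_cast; rfl
  rw [this]; ring

lemma B_G (τ : ℂ) : B τ = Complex.exp (π * I * τ / 2) * G eb (Q τ) := by
  unfold B theta2 G eb Q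
  rw [← tsum_mul_left]
  refine tsum_congr fun n ↦ ?_
  rw [← Complex.exp_nat_mul, ← Complex.exp_add]
  congr 1
  have : ((n * (n+1)).natAbs : ℂ) = (n:ℂ) * (n + 1) := by
    have : ((n * (n+1)).natAbs : ℤ) = n * (n+1) := by
      rw [Int.natCast_natAbs, abs_of_nonneg]
      rcases le_or_gt 0 n with h | h
      · positivity
      · exact mul_nonneg_of_nonpos_of_nonpos h.le (by omega)
    have := congrArg (Int.cast : ℤ → ℂ) this
    rw [Int.cast_natCast] at this
    rw [this]; push_cast; rfl
  rw [this]; ring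

/-- The Euler product. -/
def P (q : ℂ) : ℂ := ∏' n : ℕ, (1 - q ^ (n + 1))

lemma P_diff : DifferentiableOn ℂ P (Metric.ball 0 1) :=
  ModularForm.differentiableOn_tprod_one_sub_pow

lemma P_ne {q : ℂ} (hq : q ∈ Metric.ball (0:ℂ) 1) : P q ≠ 0 := by
  have hq' : ‖q‖ < 1 := by simpa using hq
  refine tprod_one_add_ne_zero_of_summable (f := fun n : ℕ ↦ -q ^ (n+1)) ?_ ?_
  · intro n h
    have h1 : q ^ (n+1) = 1 := by linear_combination -h
    have h2 := congrArg norm h1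
    rw [norm_pow, norm_one] at h2
    exact (pow_lt_one₀ (norm_nonneg q) hq' (by omega)).ne h2
  · simpa using (summable_nat_add_iff 1).mpr (summable_geometric_of_lt_one (norm_nonneg _) hq')

lemma P_zero : P 0 = 1 := by simp [P]

lemma Q_mem {τ : ℂ} (hτ : 0 < τ.im) : Q τ ∈ Metric.ball (0:ℂ) 1 := by
  simpa [Q] using UpperHalfPlane.norm_exp_two_pi_I_lt_one ⟨τ, hτ⟩

lemma eta_P (τ : ℂ) : eta τ = Complex.exp (π * I * τ / 12) * P (Q τ) := by
  unfold eta P Q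
  congr 1
  refine tprod_congr fun n ↦ ?_
  rw [← Complex.exp_nat_mul]
  congr 2; push_cast; ring

lemma eta_M (τ : ℂ) : eta τ = ModularForm.eta τ := by
  unfold eta ModularForm.eta
  congr 1
  · unfold Function.Periodic.qParam
    congr 1; push_cast; ring
  · refine tprod_congr fun n ↦ ?_
    rw [ModularForm.eta_q_eq_cexp]

lemma eta_ne {τ : ℂ} (hτ : 0 < τ.im) : eta τ ≠ 0 := by
  rw [eta_M]; exact ModularForm.eta_ne_zero hτ

lemma eta6 (τ : ℂ) : eta τ ^ 6 = Complex.exp (π * I * τ / 2) * P (Q τ) ^ 6 := by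
  rw [eta_P, mul_pow, ← Complex.exp_nat_mul]
  congr 2; push_cast; ring

lemma eta6_S {τ : ℂ} (hτ : 0 < τ.im) : eta (-1/τ) ^ 6 = I * τ^3 * eta τ ^ 6 := by
  have h0 : τ ≠ 0 := by rintro rfl; simp at hτ
  have h := ModularForm.eta_comp_eq_csqrt_I_inv (x := τ) hτ
  simp only [Function.comp, Pi.smul_apply, Pi.mul_apply, smul_eq_mul] at h
  have hs (z : ℂ) : Complex.sqrt z ^ 6 = z ^ 3 := by
    rw [pow_mul (Complex.sqrt z) 2 3, Complex.sqrt, ← Complex.cpow_nat_mul]; simp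
  rw [eta_M, eta_M, h, mul_pow, mul_pow, inv_pow, hs, hs]
  have : (I^3)⁻¹ = I := by
    rw [Complex.I_pow_three, inv_neg, Complex.inv_I, neg_neg]
  rw [this]; ring

lemma im_S {τ : ℂ} (hτ : 0 < τ.im) : 0 < (-1/τ).im := by
  have h0 : τ ≠ 0 := by rintro rfl; simp at hτ
  rw [neg_div, Complex.neg_im, one_div, Complex.inv_im, neg_div, neg_neg]
  exact div_pos hτ (Complex.normSq_pos.mpr h0)

/-- `h/η⁶` as function of `q`. -/
def H (q : ℂ) : ℂ := (G ea q ^ 5 * G eb q - q * G ea q * G eb q ^ 5) / P q ^ 6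

lemma H_Q {τ : ℂ} : H (Q τ) = (A τ ^ 5 * B τ - A τ * B τ ^ 5) / eta τ ^ 6 := by
  have h4 : Complex.exp (π * I * τ / 2) ^ 4 = Q τ := by
    rw [Q, ← Complex.exp_nat_mul]; congr 1; push_cast; ring
  rw [eta6, H, A_G, B_G]
  have : G ea (Q τ) ^ 5 * (Complex.exp (π * I * τ / 2) * G eb (Q τ)) -
      G ea (Q τ) * (Complex.exp (π * I * τ / 2) * G eb (Q τ)) ^ 5 =
      Complex.exp (π * I * τ / 2) * (G ea (Q τ) ^ 5 * G eb (Q τ) -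
        Q τ * G ea (Q τ) * G eb (Q τ) ^ 5) := by
    rw [← h4]; ring
  rw [this, mul_div_mul_left _ _ (Complex.exp_ne_zero _)]

lemma H_diff : DifferentiableOn ℂ H (Metric.ball 0 1) := by
  have h1 := G_diff ea hea
  have h2 := G_diff eb heb
  refine DifferentiableOn.div ?_ (P_diff.pow 6) fun q hq ↦ pow_ne_zero _ (P_ne hq)
  exact ((h1.pow 5).mul h2).sub ((differentiableOn_id.mul h1).mul (h2.pow 5))

lemma h_eq {τ : ℂ} (hτ : 0 < τ.im) : A τ ^ 5 * B τ - A τ * B τ ^ 5 = 2 * eta τ ^ 6 := by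
  have h := const_of_S_inv H H_diff (fun τ hτ ↦ ?_) τ hτ
  · change H (Q τ) = _ at h
    rw [H_Q, div_eq_iff (pow_ne_zero _ (eta_ne hτ))] at h
    rw [h]
    simp [H, G_ea_zero, G_eb_zero, P_zero]
  · change H (Q (-1/τ)) = H (Q τ)
    have h0 : τ ≠ 0 := by rintro rfl; simp at hτ
    have he := eta_ne hτ
    rw [H_Q, H_Q, eta6_S hτ, A_S hτ, B_S hτ, div_eq_div_iff
      (by simp [h0, he]) (by simp [he])]
    have hc : c τ ^ 6 = I * τ^3 / 8 := by
      rw [pow_mul (c τ) 2 3, c_sq, div_pow, mul_pow, neg_pow, Complex.I_pow_three]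
      ring
    linear_combination (8 * (A τ ^ 5 * B τ - A τ * B τ ^ 5) * eta τ ^ 6) * hc

/-- derivatives in terms of q -/
lemma Q_deriv (τ : ℂ) : HasDerivAt Q (2 * π * I * Q τ) τ := by
  have : HasDerivAt (fun τ ↦ 2 * π * I * τ) (2 * π * I) τ := by
    simpa using (hasDerivAt_id τ).const_mul (2 * π * I)
  exact this.cexp.congr_deriv (by simp only [Q]; ring)

lemma G_deriv (e : ℤ → ℕ) (he : ∀ n, n.natAbs ≤ e n + 1) {τ : ℂ} (hτ : 0 < τ.im) :
    HasDerivAt (fun τ ↦ G e (Q τ)) (deriv (G e) (Q τ) * (2 * π * I * Q τ)) τ :=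
  ((G_diff e he).differentiableAt (Metric.isOpen_ball.mem_nhds (Q_mem hτ))).hasDerivAt.comp τ
    (Q_deriv τ)

lemma A_deriv {τ : ℂ} (hτ : 0 < τ.im) :
    HasDerivAt A (deriv (G ea) (Q τ) * (2 * π * I * Q τ)) τ := by
  rw [funext A_G]; exact G_deriv ea hea hτ

lemma B_deriv {τ : ℂ} (hτ : 0 < τ.im) :
    HasDerivAt B (Complex.exp (π * I * τ / 2) *
      (π * I / 2 * G eb (Q τ) + deriv (G eb) (Q τ) * (2 * π * I * Q τ))) τ := by
  rw [funext B_G]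
  have : HasDerivAt (fun τ ↦ π * I * τ / 2) (π * I / 2) τ := by
    simpa using ((hasDerivAt_id τ).const_mul (π * I)).div_const 2
  exact (this.cexp.mul (G_deriv eb heb hτ)).congr_deriv (by ring)

/-- The Wronskian. -/
def W (τ : ℂ) : ℂ := A τ * deriv B τ - B τ * deriv A τ

/-- `W/η⁶` as function of `q`. -/
def K (q : ℂ) : ℂ := (G ea q * (π * I / 2 * G eb q + deriv (G eb) q * (2 * π * I * q))
  - G eb q * (deriv (G ea) q * (2 * π * I * q))) / P q ^ 6

lemma K_Q {τ : ℂ} (hτ : 0 < τ.im) : K (Q τ) = W τ / eta τ ^ 6 := by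
  rw [eta6, K, W, (A_deriv hτ).deriv, (B_deriv hτ).deriv, A_G, B_G,
    ← mul_div_mul_left _ _ (Complex.exp_ne_zero (π * I * τ / 2))]
  congr 1; ring

lemma K_diff : DifferentiableOn ℂ K (Metric.ball 0 1) := by
  have h1 := G_diff ea hea
  have h2 := G_diff eb heb
  have h3 := h1.deriv Metric.isOpen_ball
  have h4 := h2.deriv Metric.isOpen_ball
  refine DifferentiableOn.div ?_ (P_diff.pow 6) fun q hq ↦ pow_ne_zero _ (P_ne hq)
  exact (h1.mul ((h2.const_mul _).add (h4.mul (differentiableOn_id.const_mul _)))).sub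
    (h2.mul (h3.mul (differentiableOn_id.const_mul _)))

lemma W_S {τ : ℂ} (hτ : 0 < τ.im) : W (-1/τ) = I * τ^3 * W τ := by
  have h0 : τ ≠ 0 := by rintro rfl; simp at hτ
  have hA := (A_deriv hτ).differentiableAt.hasDerivAt
  have hB := (B_deriv hτ).differentiableAt.hasDerivAt
  have hA' := (A_deriv (im_S hτ)).differentiableAt.hasDerivAt
  have hB' := (B_deriv (im_S hτ)).differentiableAt.hasDerivAt
  have hi : HasDerivAt (fun t : ℂ ↦ -1/t) (1/τ^2) τ := by
    have := (hasDerivAt_inv h0).neg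
    refine (this.congr_deriv (by simp)).congr_of_eventuallyEq (.of_forall fun t ↦ ?_)
    simp [neg_div]
  have hcd : DifferentiableAt ℂ c τ := by
    unfold c
    refine DifferentiableAt.cpow (by fun_prop) (by fun_prop) ?_
    left; simpa using hτ
  have hc := hcd.hasDerivAt
  have hev : ∀ᶠ t in nhds τ, 0 < t.im :=
    (isOpen_lt continuous_const Complex.continuous_im).mem_nhds hτ
  have e1 : deriv A (-1/τ) * (1/τ^2) =
      deriv c τ * (A τ + B τ) + c τ * (deriv A τ + deriv B τ) := by
    refine (hA'.comp τ hi).unique ((hc.mul (hA.add hB)).congr_of_eventuallyEq ?_)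
    filter_upwards [hev] with t ht using A_S ht
  have e2 : deriv B (-1/τ) * (1/τ^2) =
      deriv c τ * (A τ - B τ) + c τ * (deriv A τ - deriv B τ) := by
    refine (hB'.comp τ hi).unique ((hc.mul (hA.sub hB)).congr_of_eventuallyEq ?_)
    filter_upwards [hev] with t ht using B_S ht
  have f1 : deriv A (-1/τ) = τ^2 * (deriv c τ * (A τ + B τ) + c τ * (deriv A τ + deriv B τ)) := by
    rw [← e1]; field_simp
  have f2 : deriv B (-1/τ) = τ^2 * (deriv c τ * (A τ - B τ) + c τ * (deriv A τ - deriv B τ)) := by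
    rw [← e2]; field_simp
  unfold W
  rw [f1, f2, A_S hτ, B_S hτ]
  linear_combination (-2 * τ^2 * (A τ * deriv B τ - B τ * deriv A τ)) * c_sq τ

lemma W_eq {τ : ℂ} (hτ : 0 < τ.im) : W τ = π * I * eta τ ^ 6 := by
  have h := const_of_S_inv K K_diff (fun τ hτ ↦ ?_) τ hτ
  · change K (Q τ) = _ at h
    rw [K_Q hτ, div_eq_iff (pow_ne_zero _ (eta_ne hτ))] at h
    rw [h]
    simp [K, G_ea_zero, G_eb_zero, P_zero]
  · change K (Q (-1/τ)) = K (Q τ)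
    have h0 : τ ≠ 0 := by rintro rfl; simp at hτ
    have he := eta_ne hτ
    rw [K_Q hτ, K_Q (im_S hτ), eta6_S hτ, W_S hτ, mul_div_mul_left _ _ (by simp [h0])]

lemma E2_M {τ : ℂ} (hτ : 0 < τ.im) : E2 τ = EisensteinSeries.E2 ⟨τ, hτ⟩ := by
  rw [EisensteinSeries.E2_eq_tsum_cexp, E2]
  congr 2
  rw [tsum_pnat_eq_tsum_succ (f := fun n ↦
    (ArithmeticFunction.sigma 1 n : ℂ) * Complex.exp (2 * π * I * τ) ^ n)]

lemma eta_deriv {τ : ℂ} (hτ : 0 < τ.im) :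
    HasDerivAt eta (π * I / 12 * E2 τ * eta τ) τ := by
  have h := ModularForm.logDeriv_eta_eq_E2 ⟨τ, hτ⟩
  rw [← E2_M, logDeriv_apply] at h
  have hd := (ModularForm.differentiableAt_eta_of_mem_upperHalfPlaneSet (z := τ) hτ).hasDerivAt
  have hne := ModularForm.eta_ne_zero (z := τ) hτ
  rw [funext eta_M]
  refine hd.congr_deriv ?_
  rw [← h]
  simp [hne]

lemma main_derivs {τ : ℂ} (hτ : 0 < τ.im) :
    HasDerivAt A (π * I / 12 * (E2 τ - A τ ^ 4 + 5 * B τ ^ 4) * A τ) τ ∧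
    HasDerivAt B (π * I / 12 * (E2 τ + 5 * A τ ^ 4 - B τ ^ 4) * B τ) τ := by
  have hA := (A_deriv hτ).differentiableAt.hasDerivAt
  have hB := (B_deriv hτ).differentiableAt.hasDerivAt
  have hev : ∀ᶠ t in nhds τ, 0 < t.im :=
    (isOpen_lt continuous_const Complex.continuous_im).mem_nhds hτ
  have hh := h_eq hτ
  have hw := W_eq hτ
  have hne := pow_ne_zero 6 (eta_ne hτ)
  have d := (((hA.pow 5).mul hB).sub (hA.mul (hB.pow 5))).unique
    ((((eta_deriv hτ).pow 6).const_mul 2).congr_of_eventuallyEq (by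
      filter_upwards [hev] with t ht using h_eq ht))
  simp only [Pi.pow_apply] at d
  unfold W at hw
  norm_num at d
  constructor
  · refine hA.congr_deriv ?_
    refine mul_left_cancel₀ (mul_ne_zero (by norm_num : (12:ℂ) ≠ 0) hne) ?_
    linear_combination A τ * d - (A τ ^ 5 - 5 * A τ * B τ ^ 4) * hw - 6 * deriv A τ * hh
  · refine hB.congr_deriv ?_
    refine mul_left_cancel₀ (mul_ne_zero (by norm_num : (12:ℂ) ≠ 0) hne) ?_
    linear_combination B τ * d + (5 * A τ ^ 4 * B τ - B τ ^ 5) * hw - 6 * deriv B τ * hh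

theorem Dtau_htilde (τ : ℂ) (hτ : 0 < τ.im) :
    Dtau htilde0 τ = 5/12 * E2hat τ * htilde0 τ - 1/24 * h0 τ ∧
    Dtau htilde1 τ = 5/12 * E2hat τ * htilde1 τ - 1/24 * h1 τ := by
  obtain ⟨hA, hB⟩ := main_derivs hτ
  have he := eta_ne hτ
  have hη := (eta_deriv hτ).pow 6
  have hh := h_eq hτ
  have hpi : (π : ℂ) ≠ 0 := by exact_mod_cast Real.pi_ne_zero
  have him : (τ.im : ℂ) ≠ 0 := by exact_mod_cast hτ.ne'
  have hI : I * I = -1 := Complex.I_mul_I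
  have h3 : theta3 τ 0 ^ 2 = A τ ^ 2 + B τ ^ 2 := theta3_sq hτ
  have h4 : theta4 τ ^ 2 = A τ ^ 2 - B τ ^ 2 := theta4_sq hτ
  have h2 : theta2 τ 0 ^ 2 = 2 * A τ * B τ := theta2_sq hτ
  have h24 : theta4 τ ^ 4 - theta2 τ 0 ^ 4 = A τ ^ 4 - 6 * A τ ^ 2 * B τ ^ 2 + B τ ^ 4 := by
    rw [pow_mul (theta4 τ) 2 2, pow_mul (theta2 τ 0) 2 2, h4, h2]; ring
  have hAB : A τ ^ 2 + B τ ^ 2 ≠ 0 := by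
    intro h
    apply pow_ne_zero 6 he
    linear_combination (-1/2) * hh + (1/2) * A τ * B τ * (A τ ^ 2 - B τ ^ 2) * h
  have hinv : 1 / (A τ ^ 2 + B τ ^ 2) = A τ * B τ * (A τ ^ 2 - B τ ^ 2) / (2 * eta τ ^ 6) := by
    rw [div_eq_div_iff hAB (by simp [he])]
    linear_combination -hh
  have d0 : HasDerivAt htilde0 _ τ := hB.div hη (pow_ne_zero 6 he)
  have d1 : HasDerivAt htilde1 _ τ := hA.neg.div hη (pow_ne_zero 6 he)
  have t0 : htilde0 τ = B τ / eta τ ^ 6 := rfl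
  have t1 : htilde1 τ = - A τ / eta τ ^ 6 := rfl
  have k0 : h0 τ = 24 * A τ * (1 / (A τ ^ 2 + B τ ^ 2))
      - 2 * ((A τ ^ 4 - 6 * A τ ^ 2 * B τ ^ 2 + B τ ^ 4) / eta τ ^ 6) * B τ := by
    rw [← h24, ← h3, mul_one_div]; rfl
  have k1 : h1 τ = 24 * B τ * (1 / (A τ ^ 2 + B τ ^ 2))
      + 2 * ((A τ ^ 4 - 6 * A τ ^ 2 * B τ ^ 2 + B τ ^ 4) / eta τ ^ 6) * A τ := by
    rw [← h24, ← h3, mul_one_div]; rfl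
  simp only [Pi.pow_apply, Pi.neg_apply] at d0 d1
  constructor
  · rw [Dtau, d0.deriv, E2hat, t0, k0, hinv]
    field_simp
    ring_nf
    simp only [Complex.I_sq]
    ring
  · rw [Dtau, d1.deriv, E2hat, t1, k1, hinv]
    field_simp
    ring_nf
    simp only [Complex.I_sq]
    ring

end KZ
end
end
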